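/- arXiv:1704.05836 — 7 statements merged into one kernel-verified Lean document; each statement's English description precedes it below -/
import Mathlib

section
/- There is a unique a ∈ (0, π/2) satisfying cos(a) + sin(a)/a = 1, and this a satisfies 1 − cos(a) > 0.738 > 1/(1 + 1/e). (In particular, the guarantee α = 1 − cos(a) of the paper's algorithm exceeds the bound 1/(1+1/e) conjectured by Hill and Kertz to be optimal.) -/
/-!
By the half-angle formula `cot (x / 2) = sin x / (1 - cos x)`, the equation
`cos x + sin x / x = 1` says that `x` is a fixed point of `fun x ↦ cot (x / 2)`. This map is
strictly decreasing on `(0, 2π)`, so it has at most one fixed point there. The left-hand side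
exceeds `1` at `1.306` and is `2 / π < 1` at `π / 2`, so a root lies in between, and its cosine is
smaller than `cos 1.306 ≈ 0.2617`.
-/

section

open Real Set

theorem strictAntiOn_cot : StrictAntiOn cot (Ioo 0 π) := by
  intro x hx y hy hxy
  simp only [← tan_inv_eq_cot, ← tan_pi_div_two_sub]
  exact strictMonoOn_tan ⟨by linarith [hy.2], by linarith [hy.1]⟩
    ⟨by linarith [hx.2], by linarith [hx.1]⟩ (by linarith)

theorem strictMonoOn_sub_cot_half :
    StrictMonoOn (fun x : ℝ ↦ x - cot (x / 2)) (Ioo 0 (2 * π)) := by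
  intro x hx y hy hxy
  have hcot : cot (y / 2) < cot (x / 2) :=
    strictAntiOn_cot ⟨by linarith [hx.1], by linarith [hx.2]⟩
      ⟨by linarith [hy.1], by linarith [hy.2]⟩ (by linarith)
  exact sub_lt_sub hxy hcot

-- When `cos x = 1` both sides are `0`, by division by zero.
theorem cot_half_eq_sin_div_one_sub_cos (x : ℝ) : cot (x / 2) = sin x / (1 - cos x) := by
  have hsin : sin x = 2 * sin (x / 2) * cos (x / 2) := by
    rw [← sin_two_mul, mul_div_cancel₀ x two_ne_zero]
  have hcos : 1 - cos x = 2 * sin (x / 2) * sin (x / 2) := by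
    rw [mul_assoc, ← sq, sin_sq_eq_half_sub, mul_div_cancel₀ x two_ne_zero]
    ring
  rw [cot_eq_cos_div_sin, hsin, hcos]
  rcases eq_or_ne (sin (x / 2)) 0 with h | h
  · simp [h]
  · rw [mul_div_mul_left _ _ (mul_ne_zero two_ne_zero h)]

theorem cos_add_sin_div_eq_one_iff {x : ℝ} (hx : cos x ≠ 1) :
    cos x + sin x / x = 1 ↔ x - cot (x / 2) = 0 := by
  have hx0 : x ≠ 0 := by
    rintro rfl
    exact hx cos_zero
  have hcos : 1 - cos x ≠ 0 := sub_ne_zero.mpr hx.symm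
  rw [← eq_sub_iff_add_eq', div_eq_iff hx0, cot_half_eq_sin_div_one_sub_cos, sub_eq_zero,
    eq_div_iff hcos, mul_comm, eq_comm]

theorem eq_of_cos_add_sin_div_eq_one {x y : ℝ} (hx : x ∈ Ioo 0 (2 * π)) (hy : y ∈ Ioo 0 (2 * π))
    (hx_root : cos x + sin x / x = 1) (hy_root : cos y + sin y / y = 1) : x = y := by
  have cos_ne_one {z : ℝ} (hz : z ∈ Ioo 0 (2 * π)) : cos z ≠ 1 := fun h ↦
    hz.1.ne' ((cos_eq_one_iff_of_lt_of_lt (by linarith [hz.1, hz.2]) hz.2).mp h)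
  apply strictMonoOn_sub_cot_half.injOn hx hy
  exact ((cos_add_sin_div_eq_one_iff (cos_ne_one hx)).mp hx_root).trans
    ((cos_add_sin_div_eq_one_iff (cos_ne_one hy)).mp hy_root).symm

theorem pi_div_two_sub_one_point_three_zero_six_mem_Ioo : π / 2 - 1.306 ∈ Ioo 0.2647 0.2648 := by
  constructor <;> linarith [pi_gt_d4, pi_lt_d4]

theorem cos_one_point_three_zero_six_lt : cos 1.306 < 0.262 := by
  have hy := pi_div_two_sub_one_point_three_zero_six_mem_Ioo
  have hsin := (abs_le.mp (sin_bound (x := 0.2648) (by norm_num [abs_le]))).2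
  calc cos 1.306 = sin (π / 2 - 1.306) := (sin_pi_div_two_sub _).symm
    _ ≤ sin 0.2648 :=
      sin_le_sin_of_le_of_le_pi_div_two (by linarith [hy.1, pi_pos]) (by linarith [pi_gt_three])
        hy.2.le
    _ ≤ 0.2648 - 0.2648 ^ 3 / 6 + |0.2648| ^ 5 / 100 := sub_le_iff_le_add'.mp hsin
    _ < 0.262 := by norm_num [abs_of_pos]

theorem one_lt_cos_add_sin_div_one_point_three_zero_six : 1 < cos 1.306 + sin 1.306 / 1.306 := by
  obtain ⟨hl, hu⟩ := pi_div_two_sub_one_point_three_zero_six_mem_Ioo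
  have hcos : 0.2616 < cos 1.306 :=
    calc (0.2616 : ℝ) < 0.2647 - 0.2647 ^ 3 / 6 := by norm_num
      _ < sin 0.2647 := sin_gt_sub_cube (by norm_num)
      _ ≤ sin (π / 2 - 1.306) :=
        sin_le_sin_of_le_of_le_pi_div_two (by linarith [pi_pos]) (by linarith) hl.le
      _ = cos 1.306 := sin_pi_div_two_sub _
  have hsin : 0.9649 < sin 1.306 :=
    calc (0.9649 : ℝ) < 1 - 0.2648 ^ 2 / 2 := by norm_num
      _ ≤ 1 - (π / 2 - 1.306) ^ 2 / 2 := by gcongr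
      _ ≤ cos (π / 2 - 1.306) := one_sub_sq_div_two_le_cos
      _ = sin 1.306 := cos_pi_div_two_sub _
  calc (1 : ℝ) < 0.2616 + 0.9649 / 1.306 := by norm_num
    _ < cos 1.306 + sin 1.306 / 1.306 := by gcongr

theorem exists_cos_add_sin_div_eq_one :
    ∃ a ∈ Ioo 1.306 (π / 2), cos a + sin a / a = 1 := by
  have hle : (1.306 : ℝ) ≤ π / 2 := by linarith [pi_gt_three]
  have hcont : ContinuousOn (fun x ↦ cos x + sin x / x) (Icc 1.306 (π / 2)) := by
    refine continuousOn_cos.add (continuousOn_sin.div continuousOn_id fun x hx ↦ ?_)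
    exact (lt_of_lt_of_le (by norm_num) hx.1).ne'
  have hright : cos (π / 2) + sin (π / 2) / (π / 2) < 1 := by
    rw [cos_pi_div_two, sin_pi_div_two, zero_add, div_lt_one pi_div_two_pos]
    linarith [pi_gt_three]
  exact intermediate_value_Ioo' hle hcont ⟨hright, one_lt_cos_add_sin_div_one_point_three_zero_six⟩

theorem one_div_one_add_one_div_exp_one_lt : 1 / (1 + 1 / exp 1) < 0.738 :=
  calc 1 / (1 + 1 / exp 1) < 1 / (1 + 1 / 2.8) := by
        gcongr
        exact exp_one_lt_d9.trans (by norm_num)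
    _ < 0.738 := by norm_num

-- The interval `(0, 2π)` cannot be enlarged: `2π` is a second root.
theorem unique_root_and_bound_general :
    ∃ a ∈ Ioo 0 (π / 2), (∀ x ∈ Ioo 0 (2 * π), cos x + sin x / x = 1 ↔ x = a) ∧
      1 - cos a > 0.738 ∧ (0.738 : ℝ) > 1 / (1 + 1 / exp 1) := by
  obtain ⟨a, ⟨hlow, hhigh⟩, hroot⟩ := exists_cos_add_sin_div_eq_one
  have hpos : 0 < a := lt_trans (by norm_num) hlow
  have ha : a ∈ Ioo 0 (2 * π) := ⟨hpos, by linarith [pi_pos]⟩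
  have hcos : cos a < 0.262 :=
    (cos_lt_cos_of_nonneg_of_le_pi_div_two (by norm_num) hhigh.le hlow).trans
      cos_one_point_three_zero_six_lt
  refine ⟨a, ⟨hpos, hhigh⟩, fun x hx ↦ ⟨fun h ↦ ?_, ?_⟩, by linarith,
    one_div_one_add_one_div_exp_one_lt⟩
  · exact eq_of_cos_add_sin_div_eq_one hx ha h hroot
  · rintro rfl
    exact hroot

end

/-- There is a unique `a ∈ (0, π/2)` satisfying
`cos a + sin a / a = 1`, and this `a` satisfies
`1 - cos a > 0.738 > 1/(1 + 1/e)`. -/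
theorem unique_root_and_bound :
    (∃! a : ℝ, a ∈ Set.Ioo 0 (Real.pi / 2) ∧ Real.cos a + Real.sin a / a = 1) ∧
    (∀ a : ℝ, a ∈ Set.Ioo 0 (Real.pi / 2) → Real.cos a + Real.sin a / a = 1 →
      1 - Real.cos a > 0.738 ∧ (0.738 : ℝ) > 1 / (1 + 1 / Real.exp 1)) := by
  obtain ⟨a, ha, hroot, hbound⟩ := unique_root_and_bound_general
  have hroot' {x : ℝ} (hx : x ∈ Set.Ioo 0 (Real.pi / 2)) :=
    hroot x ⟨hx.1, by linarith [hx.2, Real.pi_pos]⟩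
  exact ⟨⟨a, ⟨ha, (hroot' ha).mpr rfl⟩, fun x hx ↦ (hroot' hx.1).mp hx.2⟩,
    fun x hx h ↦ (hroot' hx).mp h ▸ hbound⟩
end

section
/- Let h : [0,1] → [0,1] be continuous, strictly decreasing, strictly concave with h(0) = 1, and let F be a cumulative distribution function that is continuous and strictly increasing on a subinterval of [0,∞). For any positive integer n, the sequence of thresholds θ_i = F⁻¹(h(i/n)/h((i−1)/n)), 1 ≤ i ≤ n, is strictly decreasing: θ_i > θ_{i+1} for all 1 ≤ i ≤ n−1. -/
/-!
The logarithm of a positive strictly concave function is strictly concave, and the increments of a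
strictly concave function over a step of fixed length strictly decrease. Applied to `log ∘ h` with
step `1 / n`, this says that the ratios `h (i / n) / h ((i - 1) / n)` strictly decrease in `i`;
since `F` is strictly increasing, so do the thresholds.
-/

section Composition

variable {𝕜 E β γ : Type*} [Semiring 𝕜] [PartialOrder 𝕜]
  [AddCommMonoid E] [AddCommMonoid β] [PartialOrder β] [AddCommMonoid γ] [PartialOrder γ]
  [SMul 𝕜 E] [SMul 𝕜 β] [SMul 𝕜 γ]

/- Mathlib's `ConcaveOn.comp_strictConcaveOn` takes `t = f '' s`, which need not be convex when
`f` is discontinuous. -/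
theorem strictConcaveOn_comp_of_mapsTo {s : Set E} {t : Set β} {f : E → β} {g : β → γ}
    (hg : ConcaveOn 𝕜 t g) (hg_mono : StrictMonoOn g t) (hf : StrictConcaveOn 𝕜 s f)
    (hst : Set.MapsTo f s t) : StrictConcaveOn 𝕜 s (g ∘ f) := by
  refine ⟨hf.1, fun x hx y hy hxy a b ha hb hab => ?_⟩
  have h_combo_mem : a • f x + b • f y ∈ t := hg.1 (hst hx) (hst hy) ha.le hb.le hab
  have h_map_mem : f (a • x + b • y) ∈ t := hst (hf.1 hx hy ha.le hb.le hab)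
  calc a • g (f x) + b • g (f y)
      ≤ g (a • f x + b • f y) := hg.2 (hst hx) (hst hy) ha.le hb.le hab
    _ < g (f (a • x + b • y)) := hg_mono h_combo_mem h_map_mem (hf.2 hx hy hxy ha hb hab)

end Composition

theorem strictConcaveOn_log_comp {E : Type*} [AddCommMonoid E] [SMul ℝ E] {s : Set E} {f : E → ℝ}
    (hf : StrictConcaveOn ℝ s f) (hpos : ∀ x ∈ s, 0 < f x) :
    StrictConcaveOn ℝ s (Real.log ∘ f) :=
  strictConcaveOn_comp_of_mapsTo strictConcaveOn_log_Ioi.concaveOn Real.strictMonoOn_log hf hpos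

theorem strictAntiOn_map_add_sub_map {𝕜 : Type*} [Field 𝕜] [LinearOrder 𝕜]
    [IsStrictOrderedRing 𝕜] {s : Set 𝕜} {f : 𝕜 → 𝕜} (hf : StrictConcaveOn 𝕜 s f) {d : 𝕜}
    (hd : 0 < d) : StrictAntiOn (fun x => f (x + d) - f x) {x ∈ s | x + d ∈ s} := by
  rintro a ⟨ha, had⟩ b ⟨hb, hbd⟩ hab
  have h_slope : slope f b (b + d) < slope f a (a + d) :=
    calc slope f b (b + d)
        = slope f (b + d) b := slope_comm f b (b + d)
      _ < slope f (b + d) a := by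
        simpa only [slope_def_field] using
          hf.secant_strict_mono hbd ha hb (by linarith) (by linarith) hab
      _ = slope f a (b + d) := slope_comm f (b + d) a
      _ < slope f a (a + d) := by
        simpa only [slope_def_field] using
          hf.secant_strict_mono ha had hbd (by linarith) (by linarith) (by linarith)
  simpa only [slope_def_field, add_sub_cancel_left, div_lt_div_iff_of_pos_right hd] using h_slope

theorem strictAntiOn_map_add_div_map {s : Set ℝ} {f : ℝ → ℝ} (hpos : ∀ x ∈ s, 0 < f x)
    (hf : StrictConcaveOn ℝ s (Real.log ∘ f)) {d : ℝ} (hd : 0 < d) :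
    StrictAntiOn (fun x => f (x + d) / f x) {x ∈ s | x + d ∈ s} := by
  have h_log_div : ∀ x ∈ {x ∈ s | x + d ∈ s},
      Real.log (f (x + d) / f x) = Real.log (f (x + d)) - Real.log (f x) :=
    fun x hx => Real.log_div (hpos _ hx.2).ne' (hpos x hx.1).ne'
  intro a ha b hb hab
  refine (Real.log_lt_log_iff (div_pos (hpos _ hb.2) (hpos b hb.1))
    (div_pos (hpos _ ha.2) (hpos a ha.1))).1 ?_
  rw [h_log_div a ha, h_log_div b hb]
  exact strictAntiOn_map_add_sub_map hf hd ha hb hab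

theorem strictAnti_map_succ_div_map {h : ℝ → ℝ} (hpos : ∀ s ∈ Set.Icc (0 : ℝ) 1, 0 < h s)
    (hlog : StrictConcaveOn ℝ (Set.Icc 0 1) (Real.log ∘ h)) (n : ℕ) :
    StrictAnti fun i : Fin n => h (((i : ℕ) + 1 : ℝ) / n) / h (((i : ℕ) : ℝ) / n) := by
  intro i j hij
  have hn : (0 : ℝ) < n := Nat.cast_pos.2 i.pos
  have h_grid (k : Fin n) :
      ((k : ℕ) : ℝ) / n ∈ {x ∈ Set.Icc (0 : ℝ) 1 | x + 1 / n ∈ Set.Icc (0 : ℝ) 1} := by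
    have hk : ((k : ℕ) : ℝ) + 1 ≤ n := by exact_mod_cast k.isLt
    refine ⟨unitInterval.div_mem (by positivity) hn.le (by linarith), ?_⟩
    rw [← add_div]
    exact unitInterval.div_mem (by positivity) hn.le hk
  have h_lt : ((i : ℕ) : ℝ) / n < ((j : ℕ) : ℝ) / n :=
    div_lt_div_of_pos_right (Nat.cast_lt.2 hij) hn
  simpa only [add_div] using
    strictAntiOn_map_add_div_map hpos hlog (one_div_pos.2 hn) (h_grid i) (h_grid j) h_lt

theorem thresholds_strict_decreasing_general {α : Type*} [LinearOrder α] {h : ℝ → ℝ}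
    (hpos : ∀ s ∈ Set.Icc (0 : ℝ) 1, 0 < h s)
    (hlog : StrictConcaveOn ℝ (Set.Icc 0 1) (Real.log ∘ h)) {F : α → ℝ} {S : Set α}
    (hF : StrictMonoOn F S) {n : ℕ} {θ : Fin n → α} (hθmem : ∀ i, θ i ∈ S)
    (hθ : ∀ i : Fin n, F (θ i) = h (((i : ℕ) + 1 : ℝ) / n) / h (((i : ℕ) : ℝ) / n)) :
    StrictAnti θ := by
  intro i j hij
  rw [← hF.lt_iff_lt (hθmem j) (hθmem i), hθ, hθ]
  exact strictAnti_map_succ_div_map hpos hlog n hij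

/-- if `h : [0,1] → (0,1]` is continuous, strictly decreasing, strictly
concave with `h 0 = 1`, and `F` is a CDF continuous and strictly increasing on a
subinterval `[lo, hi]` of `[0,∞)`, then the thresholds
`θ_i = F⁻¹(h(i/n)/h((i−1)/n))` (expressed by `F (θ i) = h(i/n)/h((i−1)/n)` with
`θ i` in the subinterval) form a strictly decreasing sequence. -/
theorem thresholds_strict_decreasing (h : ℝ → ℝ)
    (hcont : ContinuousOn h (Set.Icc (0:ℝ) 1))
    (hmap : ∀ s ∈ Set.Icc (0:ℝ) 1, h s ∈ Set.Ioc (0:ℝ) 1)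
    (hanti : StrictAntiOn h (Set.Icc (0:ℝ) 1))
    (h0 : h 0 = 1)
    (hconc : StrictConcaveOn ℝ (Set.Icc (0:ℝ) 1) h)
    (F : ℝ → ℝ) (lo hi : ℝ) (hlo : 0 ≤ lo) (hlohi : lo < hi)
    (hFcont : ContinuousOn F (Set.Icc lo hi))
    (hFmono : StrictMonoOn F (Set.Icc lo hi))
    (n : ℕ) (hn : 0 < n) (θ : Fin n → ℝ)
    (hθmem : ∀ i, θ i ∈ Set.Icc lo hi)
    (hθ : ∀ i : Fin n, F (θ i) = h (((i : ℕ) + 1 : ℝ) / n) / h (((i : ℕ) : ℝ) / n)) :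
    ∀ i j : Fin n, i < j → θ j < θ i := by
  have hpos : ∀ s ∈ Set.Icc (0 : ℝ) 1, 0 < h s := fun s hs => (hmap s hs).1
  exact thresholds_strict_decreasing_general hpos (strictConcaveOn_log_comp hconc hpos) hFmono
    hθmem hθ
end

section
/- For every ε ∈ (0,1) there exists a natural number n_ε such that for every integer n ≥ n_ε and every real z with 0 ≤ z ≤ 1, one has 1 − (1−z)^n ≤ (1 − exp(−n·z))/(1−ε). (Equivalently: if X_1,…,X_n are i.i.d. with CDF F and G(x) = 1 − F(x), then Pr[max_i X_i ≥ x] = 1 − F(x)^n ≤ (1 − exp(−n·G(x)))/(1−ε) for all x.) -/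
/-!
Since `(1 - z) * exp z ≥ 1 - z ^ 2` for `z ≤ 1`, Bernoulli's inequality shows that `(1 - z) ^ n`
falls below `exp (-t)`, where `t = n * z`, by at most `exp (-t) * (n * z ^ 2)`, that is,
`t ^ 2 * exp (-t) / n`. Since `t ^ 2 ≤ exp t - 1` for `t ≥ 0`, this loss is at most
`(1 - exp (-t)) / n`: a relative error of `1 / n` uniformly in `z`.
-/

open Real

theorem one_sub_sq_le_one_sub_mul_exp {x : ℝ} (hx : x ≤ 1) : 1 - x ^ 2 ≤ (1 - x) * exp x :=
  calc 1 - x ^ 2 = (1 - x) * (x + 1) := by ring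
    _ ≤ (1 - x) * exp x := mul_le_mul_of_nonneg_left (add_one_le_exp x) (sub_nonneg.2 hx)

theorem exp_neg_mul_one_sub_mul_sq_le_one_sub_pow (n : ℕ) {x : ℝ} (hx : x ≤ 1) :
    exp (-(n * x)) * (1 - n * x ^ 2) ≤ (1 - x) ^ n := by
  have hnonneg : 0 ≤ (1 - x) * exp x := mul_nonneg (sub_nonneg.2 hx) (exp_pos x).le
  have hpow : 1 - n * x ^ 2 ≤ ((1 - x) * exp x) ^ n :=
    calc 1 - n * x ^ 2 = 1 + n * ((1 - x ^ 2) - 1) := by ring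
      _ ≤ 1 + n * ((1 - x) * exp x - 1) := by gcongr; exact one_sub_sq_le_one_sub_mul_exp hx
      _ ≤ ((1 - x) * exp x) ^ n := one_add_mul_sub_le_pow (by linarith) n
  calc exp (-(n * x)) * (1 - n * x ^ 2) ≤ exp (-(n * x)) * ((1 - x) * exp x) ^ n := by gcongr
    _ = (1 - x) ^ n := by
      rw [mul_pow, ← exp_nat_mul, mul_left_comm, ← exp_add, neg_add_cancel, exp_zero, mul_one]

theorem sq_le_exp_sub_one {t : ℝ} (ht : 0 ≤ t) : t ^ 2 ≤ exp t - 1 := by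
  have taylor : 1 + t + t ^ 2 / 2 + t ^ 3 / 6 ≤ exp t := by
    simpa [Finset.sum_range_succ, Nat.factorial] using sum_le_exp_of_nonneg ht 4
  have hcubic : t ^ 2 ≤ t + t ^ 2 / 2 + t ^ 3 / 6 := by
    linarith [mul_nonneg ht (sq_nonneg (t - 3 / 2))]
  linarith

theorem sq_mul_exp_neg_le_one_sub_exp_neg {t : ℝ} (ht : 0 ≤ t) :
    t ^ 2 * exp (-t) ≤ 1 - exp (-t) :=
  calc t ^ 2 * exp (-t) ≤ (exp t - 1) * exp (-t) := by gcongr; exact sq_le_exp_sub_one ht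
    _ = 1 - exp (-t) := by rw [sub_mul, ← exp_add, add_neg_cancel, exp_zero, one_mul]

theorem one_sub_one_sub_pow_le_one_add_inv_mul (n : ℕ) {z : ℝ} (hz₀ : 0 ≤ z) (hz₁ : z ≤ 1) :
    1 - (1 - z) ^ n ≤ (1 + (n : ℝ)⁻¹) * (1 - exp (-(n * z))) := by
  have herror : exp (-(n * z)) * (n * z ^ 2) ≤ (n : ℝ)⁻¹ * (1 - exp (-(n * z))) :=
    calc exp (-(n * z)) * (n * z ^ 2) = (n : ℝ)⁻¹ * ((n * z) ^ 2 * exp (-(n * z))) := by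
          field
      _ ≤ (n : ℝ)⁻¹ * (1 - exp (-(n * z))) := by
          gcongr
          exact sq_mul_exp_neg_le_one_sub_exp_neg (by positivity)
  calc 1 - (1 - z) ^ n ≤ 1 - exp (-(n * z)) * (1 - n * z ^ 2) :=
        sub_le_sub_left (exp_neg_mul_one_sub_mul_sq_le_one_sub_pow n hz₁) 1
    _ = 1 - exp (-(n * z)) + exp (-(n * z)) * (n * z ^ 2) := by ring
    _ ≤ 1 - exp (-(n * z)) + (n : ℝ)⁻¹ * (1 - exp (-(n * z))) := by gcongr
    _ = (1 + (n : ℝ)⁻¹) * (1 - exp (-(n * z))) := by ring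

/-- for every `ε ∈ (0,1)` there is `n₀` such that for all `n ≥ n₀` and
`z ∈ [0,1]`, `1 − (1−z)^n ≤ (1 − exp(−n·z))/(1−ε)`. -/
theorem max_upper_bound (ε : ℝ) (hε : ε ∈ Set.Ioo (0:ℝ) 1) :
    ∃ n₀ : ℕ, ∀ n : ℕ, n₀ ≤ n → ∀ z ∈ Set.Icc (0:ℝ) 1,
      1 - (1 - z) ^ n ≤ (1 - Real.exp (-((n : ℝ) * z))) / (1 - ε) := by
  obtain ⟨hε₀, hε₁⟩ := hε
  refine ⟨⌈ε⁻¹⌉₊, fun n hn z ⟨hz₀, hz₁⟩ => ?_⟩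
  have hn_inv : (n : ℝ)⁻¹ ≤ ε := inv_le_of_inv_le₀ hε₀ (Nat.ceil_le.1 hn)
  have hfactor : 1 + (n : ℝ)⁻¹ ≤ (1 - ε)⁻¹ :=
    calc 1 + (n : ℝ)⁻¹ ≤ 1 + ε := by gcongr
      _ ≤ (1 - ε)⁻¹ := by
        rw [← one_div, le_div_iff₀ (sub_pos.2 hε₁)]
        linarith [sq_nonneg ε]
  have hexp : 0 ≤ 1 - exp (-(n * z)) :=
    sub_nonneg.2 (exp_le_one_iff.2 (neg_nonpos.2 (by positivity)))
  calc 1 - (1 - z) ^ n ≤ (1 + (n : ℝ)⁻¹) * (1 - exp (-(n * z))) :=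
        one_sub_one_sub_pow_le_one_add_inv_mul n hz₀ hz₁
    _ ≤ (1 - ε)⁻¹ * (1 - exp (-(n * z))) := by gcongr
    _ = (1 - exp (-(n * z))) / (1 - ε) := inv_mul_eq_div _ _
end

section
/- Let a ∈ (0, π/2). For every ε ∈ (0,1), setting δ₀ = min(ε, ε·tan(a·ε)/(a·(1−ε)·sec²(a))), one has: for every δ with 0 < δ ≤ δ₀ and every s with ε + δ ≤ s ≤ 1, tan(a·(s−δ)) ≥ (1−ε)·tan(a·s). (Consequently the function h(s) = cos(a·s) satisfies the second defining property of a threshold function: h′(s−δ)/h(s−δ) ≤ (1−ε)·h′(s)/h(s) for such δ and s.) -/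
/-!
On `[-b, b]`, with `b < π / 2`, the tangent is Lipschitz with constant `sec² b`. Hence moving from
`a * (s - δ)` to `a * s` raises the tangent by at most `a * δ * sec² a`, and the second bound on `δ`
says that `1 - ε` times this is at most `ε * tan (a * ε)`. As `ε ≤ s - δ`, that is at most
`ε * tan (a * (s - δ))`.
-/

section

open Real

lemma tan_sub_tan {x y : ℝ} (hx : cos x ≠ 0) (hy : cos y ≠ 0) :
    tan x - tan y = sin (x - y) / (cos x * cos y) := by
  rw [tan_eq_sin_div_cos, tan_eq_sin_div_cos, sin_sub, div_sub_div _ _ hx hy]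

lemma cos_le_cos_of_abs_le {x b : ℝ} (hxb : |x| ≤ b) (hb : b ≤ π) : cos b ≤ cos x :=
  cos_abs x ▸ cos_le_cos_of_nonneg_of_le_pi (abs_nonneg x) hb hxb

lemma abs_tan_sub_tan_le {x y b : ℝ} (hx : |x| ≤ b) (hy : |y| ≤ b) (hb : b < π / 2) :
    |tan x - tan y| ≤ |x - y| / cos b ^ 2 := by
  have hb_pi : b ≤ π := by linarith [pi_pos]
  have hcosb : 0 < cos b := cos_pos_of_mem_Ioo ⟨by linarith [abs_nonneg x, pi_pos], hb⟩
  have hbx : cos b ≤ cos x := cos_le_cos_of_abs_le hx hb_pi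
  have hby : cos b ≤ cos y := cos_le_cos_of_abs_le hy hb_pi
  have hcosx : 0 < cos x := hcosb.trans_le hbx
  have hcosy : 0 < cos y := hcosb.trans_le hby
  calc |tan x - tan y|
      = |sin (x - y)| / (cos x * cos y) := by
        rw [tan_sub_tan hcosx.ne' hcosy.ne', abs_div, abs_of_pos (mul_pos hcosx hcosy)]
    _ ≤ |x - y| / (cos b * cos b) := by gcongr ?_ / (?_ * ?_); exact abs_sin_le_abs
    _ = |x - y| / cos b ^ 2 := by rw [sq]

lemma one_sub_mul_tan_le_tan {x y b ε : ℝ} (hx : |x| ≤ b) (hy : |y| ≤ b) (hb : b < π / 2)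
    (hε : ε ≤ 1) (hyx : (1 - ε) * (|y - x| / cos b ^ 2) ≤ ε * tan x) :
    (1 - ε) * tan y ≤ tan x := by
  have hincr : (1 - ε) * (tan y - tan x) ≤ ε * tan x :=
    (mul_le_mul_of_nonneg_left ((le_abs_self _).trans (abs_tan_sub_tan_le hy hx hb))
      (sub_nonneg.2 hε)).trans hyx
  linarith

end

/-- for `a ∈ (0, π/2)` and `ε ∈ (0,1)`, setting
`δ₀ = min(ε, ε·tan(a·ε)/(a·(1−ε)·sec²(a)))`, for every `0 < δ ≤ δ₀` and every
`s` with `ε + δ ≤ s ≤ 1`, one has `tan(a·(s−δ)) ≥ (1−ε)·tan(a·s)`.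
(Here `sec² a = 1 / cos² a`.) -/
theorem tan_threshold_property (a : ℝ) (ha : a ∈ Set.Ioo 0 (Real.pi / 2))
    (ε : ℝ) (hε : ε ∈ Set.Ioo (0:ℝ) 1) :
    ∀ δ : ℝ, 0 < δ →
      δ ≤ min ε (ε * Real.tan (a * ε) / (a * (1 - ε) * (1 / Real.cos a ^ 2))) →
      ∀ s : ℝ, ε + δ ≤ s → s ≤ 1 →
        Real.tan (a * (s - δ)) ≥ (1 - ε) * Real.tan (a * s) := by
  obtain ⟨ha0, ha⟩ := ha
  obtain ⟨hε0, hε1⟩ := hε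
  intro δ hδ0 hδ s hs hs1
  have hcos : 0 < Real.cos a := Real.cos_pos_of_mem_Ioo ⟨by linarith, ha⟩
  have hden : 0 < a * (1 - ε) * (1 / Real.cos a ^ 2) :=
    mul_pos (mul_pos ha0 (sub_pos.2 hε1)) (by positivity)
  have hδ_tan : δ * (a * (1 - ε) * (1 / Real.cos a ^ 2)) ≤ ε * Real.tan (a * ε) :=
    (le_div_iff₀ hden).1 (hδ.trans (min_le_right _ _))
  have habs {t : ℝ} (ht0 : 0 ≤ t) (ht1 : t ≤ 1) : |a * t| ≤ a := by
    rw [abs_of_nonneg (by positivity)]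
    exact mul_le_of_le_one_right ha0.le ht1
  have hx : |a * (s - δ)| ≤ a := habs (by linarith) (by linarith)
  have htan : Real.tan (a * ε) ≤ Real.tan (a * (s - δ)) :=
    Real.strictMonoOn_tan.monotoneOn (abs_lt.1 ((habs hε0.le hε1.le).trans_lt ha))
      (abs_lt.1 (hx.trans_lt ha)) (mul_le_mul_of_nonneg_left (by linarith) ha0.le)
  refine one_sub_mul_tan_le_tan hx (habs (by linarith) hs1) ha hε1.le ?_
  calc (1 - ε) * (|a * s - a * (s - δ)| / Real.cos a ^ 2)
      = δ * (a * (1 - ε) * (1 / Real.cos a ^ 2)) := by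
        rw [← mul_sub, sub_sub_cancel, abs_of_pos (mul_pos ha0 hδ0)]
        ring
    _ ≤ ε * Real.tan (a * ε) := hδ_tan
    _ ≤ ε * Real.tan (a * (s - δ)) := mul_le_mul_of_nonneg_left htan hε0.le
end

section
/- Let a ∈ (0, π/2) be the unique root of cos(a) + sin(a)/a − 1 = 0 and set α = 1 − cos(a). Then for every s ∈ [0,1]: 1 − cos(a·s) + tan(a·s)·(sin(a) − sin(a·s)) ≥ α·(1 − exp(−a·tan(a·s))). (This is the third property of α-strong functions for h(s) = cos(a·s), for which h′(s)/h(s) = −a·tan(a·s) and ∫ₛ¹ h(r) dr = (sin(a) − sin(a·s))/a.) -/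
/-!
Put `x = a s`. The left-hand side equals `(1 - cos a) - (1 - cos (a - x)) / cos x`, so the claim
says that `(1 - cos (a - x)) / cos x * exp (a tan x)` is at most its value at `x = 0`; in fact it
is antitone on `[0, a]`. The root equation gives `sin a = a (1 - cos a)` and
`1 - cos a = 2 / (a² + 1)`, and with these the derivative is a negative multiple of
`(sin x + sin (a - x) - sin a) * (a² - cos x - a sin x)`. The first factor is nonnegative by
subadditivity of the sine. By Cauchy–Schwarz the second one is nonnegative as soon as
`a² + 1 ≤ a⁴`, that is, as soon as `a²` is at least the golden ratio.
-/

section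

open Real

lemma sin_add_le_sin_add_sin {x y : ℝ} (hx : 0 ≤ sin x) (hy : 0 ≤ sin y) :
    sin (x + y) ≤ sin x + sin y := by
  rw [sin_add]
  exact add_le_add (mul_le_of_le_one_right hx (cos_le_one y))
    (mul_le_of_le_one_left hy (cos_le_one x))

lemma sq_add_one_mul_one_sub_cos_eq_two {a : ℝ} (hsin : sin a ≠ 0)
    (hroot : sin a = a * (1 - cos a)) : (a ^ 2 + 1) * (1 - cos a) = 2 := by
  have hcos : 1 - cos a ≠ 0 := fun h => hsin (by rw [hroot, h, mul_zero])
  apply mul_right_cancel₀ hcos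
  linear_combination sin_sq_add_cos_sq a - (sin a + a * (1 - cos a)) * hroot

lemma sq_add_one_le_pow_four {a : ℝ} (h : (a ^ 2 + 1) * (1 - cos a) = 2) :
    a ^ 2 + 1 ≤ a ^ 4 := by
  by_contra! hlt
  have hsq : a ^ 2 < 5 / 3 := by nlinarith
  -- At `y = a` the bound `1 - y ^ 2 / 2 ≤ cos y` is too weak for a contradiction.
  have hhalf : 1 - a ^ 2 / 8 ≤ cos (a / 2) := by
    linarith [one_sub_sq_div_two_le_cos (x := a / 2)]
  have hcos : 2 * (1 - a ^ 2 / 8) ^ 2 - 1 ≤ cos a := by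
    calc 2 * (1 - a ^ 2 / 8) ^ 2 - 1 ≤ 2 * cos (a / 2) ^ 2 - 1 := by gcongr; linarith
      _ = cos a := by rw [← cos_two_mul, mul_div_cancel₀ a two_ne_zero]
  have hcubic : 64 ≤ a ^ 2 * (a ^ 2 + 1) * (16 - a ^ 2) := by
    nlinarith [mul_le_mul_of_nonneg_left hcos (by positivity : 0 ≤ a ^ 2 + 1)]
  nlinarith [sq_nonneg a]

lemma cos_add_mul_sin_le_sq {a : ℝ} (ha : a ^ 2 + 1 ≤ a ^ 4) (x : ℝ) :
    cos x + a * sin x ≤ a ^ 2 := by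
  apply le_of_sq_le_sq _ (sq_nonneg a)
  calc (cos x + a * sin x) ^ 2
      = (a ^ 2 + 1) - (sin x - a * cos x) ^ 2 := by
        linear_combination (a ^ 2 + 1) * sin_sq_add_cos_sq x
    _ ≤ a ^ 2 + 1 := sub_le_self _ (sq_nonneg _)
    _ ≤ (a ^ 2) ^ 2 := by rw [← pow_mul]; exact ha

lemma two_mul_sin_sub_mul_cos_sq_sub_eq {a : ℝ} (hroot : sin a = a * (1 - cos a))
    (hcos : (a ^ 2 + 1) * (1 - cos a) = 2) (x : ℝ) :
    2 * (sin (a - x) * cos x ^ 2 - (1 - cos (a - x)) * (a + sin x * cos x)) =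
      (sin x + sin (a - x) - sin a) * (a ^ 2 - cos x - a * sin x) := by
  rw [sin_sub, cos_sub, hroot]
  linear_combination (a * (1 - cos x) + sin x * cos x) * hcos +
    (1 - cos a) * a * (1 + 2 * cos x) * sin_sq_add_cos_sq x

lemma one_sub_cos_sub_mul_le {a x : ℝ} (ha : a < π) (hroot : sin a = a * (1 - cos a))
    (hx : 0 < x) (hxa : x < a) :
    (1 - cos (a - x)) * (a + sin x * cos x) ≤ sin (a - x) * cos x ^ 2 := by
  have hcos := sq_add_one_mul_one_sub_cos_eq_two
    (sin_pos_of_pos_of_lt_pi (hx.trans hxa) ha).ne' hroot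
  have hsin : sin a ≤ sin x + sin (a - x) := by
    simpa using sin_add_le_sin_add_sin (sin_pos_of_pos_of_lt_pi hx (hxa.trans ha)).le
      (sin_pos_of_pos_of_lt_pi (sub_pos.2 hxa) (by linarith)).le
  have hsq := cos_add_mul_sin_le_sq (sq_add_one_le_pow_four hcos) x
  have hprod : 0 ≤ (sin x + sin (a - x) - sin a) * (a ^ 2 - cos x - a * sin x) :=
    mul_nonneg (by linarith) (by linarith)
  linarith [two_mul_sin_sub_mul_cos_sq_sub_eq hroot hcos x]

/-- The amount by which the left-hand side of the third property of `α`-strong functions, for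
`h s = cos (a * s)` at `x = a * s`, falls short of `α = 1 - cos a`
(see `one_sub_cos_add_tan_mul_eq`). -/
noncomputable def cosDeficit (a x : ℝ) : ℝ := (1 - cos (a - x)) / cos x

lemma cosDeficit_zero (a : ℝ) : cosDeficit a 0 = 1 - cos a := by
  simp [cosDeficit]

lemma one_sub_cos_add_tan_mul_eq {x : ℝ} (hx : cos x ≠ 0) (a : ℝ) :
    1 - cos x + tan x * (sin a - sin x) = 1 - cos a - cosDeficit a x := by
  rw [cosDeficit, tan_eq_sin_div_cos, cos_sub]
  field_simp
  linear_combination -sin_sq_add_cos_sq x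

lemma hasDerivAt_cosDeficit_mul_exp {x : ℝ} (hx : cos x ≠ 0) (a : ℝ) :
    HasDerivAt (fun y => cosDeficit a y * exp (a * tan y))
      (exp (a * tan x) / cos x ^ 3 *
        ((1 - cos (a - x)) * (a + sin x * cos x) - sin (a - x) * cos x ^ 2)) x := by
  have hnum := (((hasDerivAt_id x).const_sub a).cos).const_sub 1
  have hexp := ((hasDerivAt_tan hx).const_mul a).exp
  refine ((hnum.div (hasDerivAt_cos x) hx).mul hexp).congr_deriv ?_
  simp only [id, Pi.div_apply]
  field_simp
  ring

lemma antitoneOn_cosDeficit_mul_exp {a : ℝ} (ha : a < π / 2) (hroot : sin a = a * (1 - cos a)) :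
    AntitoneOn (fun x => cosDeficit a x * exp (a * tan x)) (Set.Icc 0 a) := by
  have hcos : ∀ x ∈ Set.Icc 0 a, 0 < cos x := fun x hx =>
    cos_pos_of_mem_Ioo ⟨by linarith [hx.1, pi_pos], hx.2.trans_lt ha⟩
  have hderiv := fun x hx => hasDerivAt_cosDeficit_mul_exp (hcos x hx).ne' a
  refine antitoneOn_of_hasDerivWithinAt_nonpos (convex_Icc 0 a)
    (fun x hx => (hderiv x hx).continuousAt.continuousWithinAt)
    (fun x hx => (hderiv x (interior_subset hx)).hasDerivWithinAt) fun x hx => ?_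
  have hpos := hcos x (interior_subset hx)
  rw [interior_Icc] at hx
  exact mul_nonpos_of_nonneg_of_nonpos (by positivity)
    (sub_nonpos.2 (one_sub_cos_sub_mul_le (by linarith [pi_pos]) hroot hx.1 hx.2))

lemma cosDeficit_le {a x : ℝ} (ha : a < π / 2) (hroot : sin a = a * (1 - cos a))
    (hx : x ∈ Set.Icc 0 a) : cosDeficit a x ≤ (1 - cos a) * exp (-(a * tan x)) := by
  rw [exp_neg, ← div_eq_mul_inv, le_div_iff₀ (exp_pos _)]
  simpa [cosDeficit_zero] using antitoneOn_cosDeficit_mul_exp ha hroot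
    (Set.left_mem_Icc.2 (hx.1.trans hx.2)) hx hx.1

end

/-- for the root `a ∈ (0, π/2)` of `cos a + sin a / a − 1 = 0` and
`α = 1 − cos a`, for every `s ∈ [0,1]`:
`1 − cos(as) + tan(as)·(sin a − sin(as)) ≥ α·(1 − exp(−a·tan(as)))`. -/
theorem third_property_cos (a : ℝ) (ha : a ∈ Set.Ioo 0 (Real.pi / 2))
    (haroot : Real.cos a + Real.sin a / a - 1 = 0)
    (s : ℝ) (hs : s ∈ Set.Icc (0:ℝ) 1) :
    1 - Real.cos (a * s) + Real.tan (a * s) * (Real.sin a - Real.sin (a * s)) ≥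
      (1 - Real.cos a) * (1 - Real.exp (-(a * Real.tan (a * s)))) := by
  have hroot : Real.sin a = a * (1 - Real.cos a) := by
    have := ha.1.ne'
    field_simp at haroot
    linarith
  have hx : a * s ∈ Set.Icc 0 a :=
    ⟨mul_nonneg ha.1.le hs.1, mul_le_of_le_one_right ha.1.le hs.2⟩
  have hcos : 0 < Real.cos (a * s) :=
    Real.cos_pos_of_mem_Ioo ⟨by linarith [hx.1, Real.pi_pos], hx.2.trans_lt ha.2⟩
  rw [one_sub_cos_add_tan_mul_eq hcos.ne']
  linarith [cosDeficit_le ha.2 hroot hx]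
end

section
/- Let a ∈ (0, π/2) be the unique root of cos(a) + sin(a)/a − 1 = 0 and set α = 1 − cos(a). Define A(w) = (1 − α + α·a·w + α·exp(−a·w))² − 1 − w². Then A(w) ≥ 0 for every real w with 0 ≤ w ≤ tan(a). -/
/-!
The root equation gives `cos a = (a² - 1) / (a² + 1)` and `sin a = 2a / (a² + 1)`. Substituting
`w = 2t / (1 - t²)`, so that `√(1 + w²) = (1 + t²) / (1 - t²)`, turns the claim into
`(1 - at)² / (1 - t²) ≤ exp (-aw)` for `-1 < t ≤ 1 / a`. There is equality at `t = 0`, and the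
logarithmic derivative of the quotient of the two sides has the sign of
`-t ((a² - 1) - 2at + (a² + 1)t²)`. The quadratic factor is nonnegative as soon as `a⁴ ≥ a² + 1`,
and `cos a ≥ 1 - a² / 2 + a⁴ / 32` rules out any smaller root `a`.
-/

open Real Set

section

variable {a t w : ℝ}

theorem one_sub_sq_div_two_add_pow_four_div_le_cos {x : ℝ} (hx : x ^ 2 ≤ 8) :
    1 - x ^ 2 / 2 + x ^ 4 / 32 ≤ cos x := by
  have hhalf : 1 - (x / 2) ^ 2 / 2 ≤ cos (x / 2) := one_sub_sq_div_two_le_cos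
  have hsq : (1 - (x / 2) ^ 2 / 2) ^ 2 ≤ cos (x / 2) ^ 2 :=
    pow_le_pow_left₀ (by linarith) hhalf 2
  have hdouble : cos x = 2 * cos (x / 2) ^ 2 - 1 := by
    rw [← cos_two_mul, mul_div_cancel₀ x two_ne_zero]
  linarith

theorem cos_eq_div_of_sin_eq (hcos : cos a ≠ 1) (hsin : sin a = a * (1 - cos a)) :
    cos a = (a ^ 2 - 1) / (a ^ 2 + 1) := by
  have hpyth : (1 - cos a) * (a ^ 2 * (1 - cos a)) = (1 - cos a) * (1 + cos a) := by
    linear_combination sin_sq_add_cos_sq a - (sin a + a * (1 - cos a)) * hsin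
  have hcancel := mul_left_cancel₀ (sub_ne_zero.2 hcos.symm) hpyth
  rw [eq_div_iff (by positivity)]
  linarith

theorem sq_add_one_le_pow_four_of_cos_eq (hcos : cos a = (a ^ 2 - 1) / (a ^ 2 + 1)) :
    a ^ 2 + 1 ≤ a ^ 4 := by
  by_contra! hlt
  have hsmall : a ^ 2 ≤ 13 / 8 := by nlinarith [sq_nonneg a]
  have hbound := one_sub_sq_div_two_add_pow_four_div_le_cos (x := a) (by linarith)
  rw [hcos, le_div_iff₀ (by positivity)] at hbound
  nlinarith [sq_nonneg a, mul_nonneg (sq_nonneg a) (sub_nonneg.2 hsmall)]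

theorem hasDerivAt_sq_div_mul_exp (a : ℝ) (ht : t ^ 2 < 1) :
    HasDerivAt (fun t ↦ (1 - a * t) ^ 2 / (1 - t ^ 2) * exp (a * (2 * t / (1 - t ^ 2))))
      (-t * (2 * (1 - a * t) * (a ^ 2 - 1 - 2 * a * t + (a ^ 2 + 1) * t ^ 2)
        / (1 - t ^ 2) ^ 3 * exp (a * (2 * t / (1 - t ^ 2))))) t := by
  have hne : 1 - t ^ 2 ≠ 0 := by linarith
  have hden : HasDerivAt (fun t : ℝ ↦ 1 - t ^ 2) (-(2 * t)) t := by
    simpa using (hasDerivAt_pow 2 t).const_sub 1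
  have hlin : HasDerivAt (fun t : ℝ ↦ 1 - a * t) (-a) t := by
    simpa using ((hasDerivAt_id t).const_mul a).const_sub 1
  have hnum : HasDerivAt (fun t : ℝ ↦ 2 * t) 2 t := by
    simpa using (hasDerivAt_id t).const_mul 2
  refine (((hlin.pow 2).div hden hne).mul ((hnum.div hden hne).const_mul a).exp).congr_deriv ?_
  simp only [Pi.div_apply, Pi.pow_apply]
  field_simp
  ring

theorem quadratic_nonneg_of_sq_add_one_le_pow_four (ha : a ^ 2 + 1 ≤ a ^ 4) (t : ℝ) :
    0 ≤ a ^ 2 - 1 - 2 * a * t + (a ^ 2 + 1) * t ^ 2 := by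
  have hpos : 0 < a ^ 2 + 1 := by positivity
  refine nonneg_of_mul_nonneg_right ?_ hpos
  linarith [sq_nonneg ((a ^ 2 + 1) * t - a)]

theorem one_lt_of_sq_add_one_le_pow_four (h0 : 0 < a) (ha : a ^ 2 + 1 ≤ a ^ 4) : 1 < a := by
  by_contra! hle
  have hfourth : a ^ 4 ≤ 1 := pow_le_one₀ h0.le hle
  linarith [pow_pos h0 2]

theorem isMaxOn_sq_div_mul_exp (h0 : 0 < a) (ha : a ^ 2 + 1 ≤ a ^ 4) :
    IsMaxOn (fun t ↦ (1 - a * t) ^ 2 / (1 - t ^ 2) * exp (a * (2 * t / (1 - t ^ 2))))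
      (Ioc (-1) a⁻¹) 0 := by
  have ha1 := one_lt_of_sq_add_one_le_pow_four h0 ha
  have hinv1 : a⁻¹ < 1 := inv_lt_one_of_one_lt₀ ha1
  have hinv0 : 0 < a⁻¹ := inv_pos.2 h0
  have hsq {t : ℝ} (ht : t ∈ Ioc (-1) a⁻¹) : t ^ 2 < 1 :=
    (sq_lt_one_iff_abs_lt_one t).2 (abs_lt.2 ⟨ht.1, ht.2.trans_lt hinv1⟩)
  have hderiv {t : ℝ} (ht : t ∈ Ioc (-1) a⁻¹) := hasDerivAt_sq_div_mul_exp a (hsq ht)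
  have hleft : Ioo (-1) 0 ⊆ Ioc (-1) a⁻¹ := fun t ht ↦ ⟨ht.1, (ht.2.trans hinv0).le⟩
  have hright : Ioo 0 a⁻¹ ⊆ Ioc (-1) a⁻¹ := fun t ht ↦ ⟨by linarith [ht.1], ht.2.le⟩
  have hcoeff {t : ℝ} (ht : t ∈ Ioc (-1) a⁻¹) :
      0 ≤ 2 * (1 - a * t) * (a ^ 2 - 1 - 2 * a * t + (a ^ 2 + 1) * t ^ 2)
        / (1 - t ^ 2) ^ 3 * exp (a * (2 * t / (1 - t ^ 2))) := by
    have hlin : 0 ≤ 1 - a * t := sub_nonneg.2 ((le_inv_mul_iff₀ h0).1 (by simpa using ht.2))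
    have hquad := quadratic_nonneg_of_sq_add_one_le_pow_four ha t
    have hden : 0 < 1 - t ^ 2 := sub_pos.2 (hsq ht)
    positivity
  refine isMaxOn_Ioc_of_deriv (hderiv ⟨by norm_num, hinv0.le⟩).continuousAt
    (hderiv ⟨by linarith, le_rfl⟩).continuousAt
    (fun t ht ↦ (hderiv (hleft ht)).differentiableAt.differentiableWithinAt)
    (fun t ht ↦ (hderiv (hright ht)).differentiableAt.differentiableWithinAt)
    (fun t ht ↦ ?_) (fun t ht ↦ ?_)
  · rw [(hderiv (hleft ht)).deriv]
    exact mul_nonneg (neg_nonneg.2 ht.2.le) (hcoeff (hleft ht))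
  · rw [(hderiv (hright ht)).deriv]
    exact mul_nonpos_of_nonpos_of_nonneg (neg_nonpos.2 ht.1.le) (hcoeff (hright ht))

theorem sq_div_le_exp_neg (h0 : 0 < a) (ha : a ^ 2 + 1 ≤ a ^ 4) (ht : -1 < t) (hat : t ≤ a⁻¹) :
    (1 - a * t) ^ 2 / (1 - t ^ 2) ≤ exp (-(a * (2 * t / (1 - t ^ 2)))) := by
  rw [exp_neg, ← one_div, le_div_iff₀ (exp_pos _)]
  simpa using isMaxOn_sq_div_mul_exp h0 ha ⟨ht, hat⟩

theorem exists_two_mul_div_one_sub_sq_eq (w : ℝ) :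
    ∃ t : ℝ, t ^ 2 < 1 ∧ 2 * t / (1 - t ^ 2) = w := by
  have hsqrt : √(1 + w ^ 2) ^ 2 = 1 + w ^ 2 := sq_sqrt (by positivity)
  have hsub : 1 - (w / (1 + √(1 + w ^ 2))) ^ 2 = 2 / (1 + √(1 + w ^ 2)) := by
    field_simp
    linear_combination hsqrt
  refine ⟨w / (1 + √(1 + w ^ 2)), sub_pos.1 (hsub ▸ by positivity), ?_⟩
  rw [hsub]
  field_simp

theorem le_inv_of_two_mul_div_le (ha : 1 < a) (ht : t ^ 2 < 1)
    (h : 2 * t / (1 - t ^ 2) ≤ 2 * a / (a ^ 2 - 1)) : t ≤ a⁻¹ := by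
  have hsum : 0 < t + a := by linarith [(abs_lt.1 ((sq_lt_one_iff_abs_lt_one t).1 ht)).1]
  rw [div_le_div_iff₀ (by linarith) (by nlinarith)] at h
  have hfactor : (t * a - 1) * (t + a) ≤ 0 := by linarith
  rw [← one_div, le_div_iff₀ (by linarith)]
  exact sub_nonpos.1 (nonpos_of_mul_nonpos_left hfactor hsum)

theorem one_add_sq_le_sq_add_exp (h0 : 0 < a) (ha : a ^ 2 + 1 ≤ a ^ 4)
    (hw : w ≤ 2 * a / (a ^ 2 - 1)) :
    1 + w ^ 2 ≤ ((a ^ 2 - 1 + 2 * a * w + 2 * exp (-(a * w))) / (a ^ 2 + 1)) ^ 2 := by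
  obtain ⟨t, ht, rfl⟩ := exists_two_mul_div_one_sub_sq_eq w
  have hle := le_inv_of_two_mul_div_le (one_lt_of_sq_add_one_le_pow_four h0 ha) ht hw
  have hexp := sq_div_le_exp_neg h0 ha (abs_lt.1 ((sq_lt_one_iff_abs_lt_one t).1 ht)).1 hle
  have hden : 0 < 1 - t ^ 2 := sub_pos.2 ht
  have hbase : (1 + t ^ 2) / (1 - t ^ 2) ≤
      (a ^ 2 - 1 + 2 * a * (2 * t / (1 - t ^ 2)) + 2 * exp (-(a * (2 * t / (1 - t ^ 2))))) /
        (a ^ 2 + 1) := by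
    calc (1 + t ^ 2) / (1 - t ^ 2)
      _ = (a ^ 2 - 1 + 2 * a * (2 * t / (1 - t ^ 2)) + 2 * ((1 - a * t) ^ 2 / (1 - t ^ 2))) /
            (a ^ 2 + 1) := by
          field_simp
          ring
      _ ≤ _ := by gcongr
  calc 1 + (2 * t / (1 - t ^ 2)) ^ 2 = ((1 + t ^ 2) / (1 - t ^ 2)) ^ 2 := by
        field_simp
        ring
    _ ≤ _ := by gcongr

end

theorem A_nonneg_general {a w : ℝ} (ha : 0 < a) (hcos : cos a ≠ 1)
    (haroot : cos a + sin a / a - 1 = 0) (hw : w ≤ tan a) :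
    0 ≤ (1 - (1 - cos a) + (1 - cos a) * a * w + (1 - cos a) * exp (-(a * w))) ^ 2 - 1 - w ^ 2 := by
  have hsin : sin a = a * (1 - cos a) := by
    field_simp at haroot
    linarith
  have hcos_eq := cos_eq_div_of_sin_eq hcos hsin
  have hquartic := sq_add_one_le_pow_four_of_cos_eq hcos_eq
  have htan : tan a = 2 * a / (a ^ 2 - 1) := by
    rw [tan_eq_sin_div_cos, hsin, hcos_eq]
    field_simp
    ring
  have hmain := one_add_sq_le_sq_add_exp ha hquartic (htan ▸ hw)
  have hrational : 1 - (1 - cos a) + (1 - cos a) * a * w + (1 - cos a) * exp (-(a * w)) =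
      (a ^ 2 - 1 + 2 * a * w + 2 * exp (-(a * w))) / (a ^ 2 + 1) := by
    rw [hcos_eq]
    field_simp
    ring
  rw [hrational]
  linarith

/-- for the root `a ∈ (0, π/2)` of `cos a + sin a / a − 1 = 0` and
`α = 1 − cos a`, the function `A(w) = (1 − α + α·a·w + α·exp(−a·w))² − 1 − w²`
is nonnegative on `[0, tan a]`. -/
theorem A_nonneg (a : ℝ) (ha : a ∈ Set.Ioo 0 (Real.pi / 2))
    (haroot : Real.cos a + Real.sin a / a - 1 = 0)
    (w : ℝ) (hw0 : 0 ≤ w) (hw1 : w ≤ Real.tan a) :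
    (1 - (1 - Real.cos a) + (1 - Real.cos a) * a * w +
        (1 - Real.cos a) * Real.exp (-(a * w))) ^ 2 - 1 - w ^ 2 ≥ 0 := by
  have hcos : cos a ≠ 1 := mt (cos_eq_one_iff_of_lt_of_lt (by linarith [ha.1, pi_pos])
    (by linarith [ha.2, pi_pos])).1 ha.1.ne'
  exact A_nonneg_general ha.1 hcos haroot hw1
end

section
/- Let a ∈ (0, π/2). For every positive integer m and every integer i with 0 ≤ i < m: 1 − cos(a·(i+1)/m)/cos(a·i/m) ≤ a·tan(a)/m. (Equivalently, for h(s) = cos(a·s) and thresholds built from h with q_j = h(j/m), one has G(θ_{i+1}) = 1 − q_{i+1}/q_i ≤ a·tan(a)/m.) -/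
/-!
Since `r + r⁻¹ ≥ 2` for `r = cos x / cos y > 0`, the relative decrease `1 - r⁻¹` of the cosine from
`x` to `y` is at most `r - 1 = (cos x - cos y) / cos y`. On `(-π/2, π/2)` the cosine is concave, so
it lies below its tangent line at `y`, and this quotient is at most `(y - x) * tan y`. For
`x = a * i / m` and `y = a * (i + 1) / m` the monotonicity of the tangent then replaces `tan y` by
`tan a`.
-/

open Set

theorem le_add_mul_sub_of_concaveOn_of_hasDerivAt {s : Set ℝ} {f : ℝ → ℝ} {f' x y : ℝ}
    (hf : ConcaveOn ℝ s f) (hx : x ∈ s) (hy : y ∈ s) (hf' : HasDerivAt f f' y) :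
    f x ≤ f y + f' * (x - y) := by
  rcases lt_trichotomy x y with hxy | rfl | hyx
  · have hslope := hf.le_slope_of_hasDerivAt hx hy hxy hf'
    rw [slope_def_field, le_div_iff₀ (sub_pos.mpr hxy)] at hslope
    linarith
  · simp
  · have hslope := hf.slope_le_of_hasDerivAt hy hx hyx hf'
    rw [slope_def_field, div_le_iff₀ (sub_pos.mpr hyx)] at hslope
    linarith

theorem cos_le_cos_add_sin_mul_sub {x y : ℝ} (hx : x ∈ Icc (-(Real.pi / 2)) (Real.pi / 2))
    (hy : y ∈ Icc (-(Real.pi / 2)) (Real.pi / 2)) :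
    Real.cos x ≤ Real.cos y + Real.sin y * (y - x) := by
  have htangent := le_add_mul_sub_of_concaveOn_of_hasDerivAt
    strictConcaveOn_cos_Icc.concaveOn hx hy (Real.hasDerivAt_cos y)
  linarith

theorem one_sub_div_le_div_sub_one {K : Type*} [Field K] [LinearOrder K] [IsStrictOrderedRing K]
    {u v : K} (hu : 0 < u) (hv : 0 < v) : 1 - v / u ≤ u / v - 1 := by
  have hdiff : u / v - 1 - (1 - v / u) = (u - v) ^ 2 / (u * v) := by field_simp
  rw [← sub_nonneg, hdiff]
  positivity

theorem one_sub_cos_div_cos_le_sub_mul_tan {x y : ℝ}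
    (hx : x ∈ Ioo (-(Real.pi / 2)) (Real.pi / 2)) (hy : y ∈ Ioo (-(Real.pi / 2)) (Real.pi / 2)) :
    1 - Real.cos y / Real.cos x ≤ (y - x) * Real.tan y := by
  have hcosx : 0 < Real.cos x := Real.cos_pos_of_mem_Ioo hx
  have hcosy : 0 < Real.cos y := Real.cos_pos_of_mem_Ioo hy
  calc 1 - Real.cos y / Real.cos x
      ≤ Real.cos x / Real.cos y - 1 := one_sub_div_le_div_sub_one hcosx hcosy
    _ ≤ (Real.cos y + Real.sin y * (y - x)) / Real.cos y - 1 := by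
        gcongr
        exact cos_le_cos_add_sin_mul_sub (Ioo_subset_Icc_self hx) (Ioo_subset_Icc_self hy)
    _ = (y - x) * Real.tan y := by
        rw [Real.tan_eq_sin_div_cos]
        field_simp
        ring

theorem mul_mem_Ioo_neg_of_mem_Icc {R : Type*} [Ring R] [LinearOrder R] [IsOrderedRing R]
    {a c t : R} (ha : a ∈ Ioo (-c) c) (ht : t ∈ Icc (-1) 1) : a * t ∈ Ioo (-c) c := by
  refine abs_lt.mp ?_
  calc |a * t| = |a| * |t| := abs_mul a t
    _ ≤ |a| := mul_le_of_le_one_right (abs_nonneg a) (abs_le.mpr ht)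
    _ < c := abs_lt.mpr ha

theorem mul_tan_mul_le_mul_tan {a t : ℝ} (ha : a ∈ Ioo (-(Real.pi / 2)) (Real.pi / 2))
    (ht : t ∈ Icc (-1) 1) : a * Real.tan (a * t) ≤ a * Real.tan a := by
  have hat := mul_mem_Ioo_neg_of_mem_Icc ha ht
  rcases le_total 0 a with ha₀ | ha₀
  · have hle : a * t ≤ a := mul_le_of_le_one_right ha₀ ht.2
    exact mul_le_mul_of_nonneg_left (Real.strictMonoOn_tan.monotoneOn hat ha hle) ha₀
  · have hle : a ≤ a * t := le_mul_of_le_one_right ha₀ ht.2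
    exact mul_le_mul_of_nonpos_left (Real.strictMonoOn_tan.monotoneOn ha hat hle) ha₀

theorem one_sub_cos_mul_div_cos_mul_le {a s t : ℝ}
    (ha : a ∈ Ioo (-(Real.pi / 2)) (Real.pi / 2)) (hs : -1 ≤ s) (hst : s ≤ t) (ht : t ≤ 1) :
    1 - Real.cos (a * t) / Real.cos (a * s) ≤ (t - s) * (a * Real.tan a) := by
  have hs_mem : s ∈ Icc (-1) 1 := ⟨hs, hst.trans ht⟩
  have ht_mem : t ∈ Icc (-1) 1 := ⟨hs.trans hst, ht⟩
  calc 1 - Real.cos (a * t) / Real.cos (a * s)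
      ≤ (a * t - a * s) * Real.tan (a * t) :=
        one_sub_cos_div_cos_le_sub_mul_tan (mul_mem_Ioo_neg_of_mem_Icc ha hs_mem)
          (mul_mem_Ioo_neg_of_mem_Icc ha ht_mem)
    _ = (t - s) * (a * Real.tan (a * t)) := by ring
    _ ≤ (t - s) * (a * Real.tan a) :=
        mul_le_mul_of_nonneg_left (mul_tan_mul_le_mul_tan ha ht_mem) (sub_nonneg.mpr hst)

theorem one_sub_cos_ratio_le_general {a m i : ℝ}
    (ha : a ∈ Ioo (-(Real.pi / 2)) (Real.pi / 2)) (hi : -m ≤ i) (him : i + 1 ≤ m) :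
    1 - Real.cos (a * (i + 1) / m) / Real.cos (a * i / m) ≤ a * Real.tan a / m := by
  have hm : 0 < m := by linarith
  have hlower : -1 ≤ i / m := by rwa [le_div_iff₀ hm, neg_one_mul]
  have hstep : i / m ≤ (i + 1) / m := by gcongr; linarith
  have hupper : (i + 1) / m ≤ 1 := (div_le_one hm).mpr him
  calc 1 - Real.cos (a * (i + 1) / m) / Real.cos (a * i / m)
      = 1 - Real.cos (a * ((i + 1) / m)) / Real.cos (a * (i / m)) := by simp only [mul_div_assoc]
    _ ≤ ((i + 1) / m - i / m) * (a * Real.tan a) :=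
        one_sub_cos_mul_div_cos_mul_le ha hlower hstep hupper
    _ = a * Real.tan a / m := by ring

/-- for `a ∈ (0, π/2)`, every positive integer `m` and `0 ≤ i < m`,
`1 − cos(a(i+1)/m)/cos(a·i/m) ≤ a·tan(a)/m`. -/
theorem one_sub_cos_ratio_le (a : ℝ) (ha : a ∈ Set.Ioo 0 (Real.pi / 2))
    (m : ℕ) (hm : 0 < m) (i : ℕ) (hi : i < m) :
    1 - Real.cos (a * (i + 1) / m) / Real.cos (a * i / m) ≤ a * Real.tan a / m :=
  one_sub_cos_ratio_le_general ⟨by linarith [ha.1, Real.pi_pos], ha.2⟩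
    (by linarith [m.cast_nonneg (α := ℝ), i.cast_nonneg (α := ℝ)]) (mod_cast hi)
end
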